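/- Let n ≥ 2 and let R be a multiset of n−1 pairwise distinct nonzero complex numbers. Let S be the set of injective tuples λ = (λ₁,…,λₙ) ∈ (ℂ∖{0})ⁿ with λ₁⋯λₙ = 1 such that Q_λ(t) = ∏_{j=1}^{n}(t−λ_j) has n−1 pairwise distinct critical points and its multiset of critical values equals R. Then S is finite and the number of equivalence classes of S under the relation λ ∼ λ′ iff there exist ω ∈ ℂ with ωⁿ = 1 and a permutation π with λ′_i = ω·λ_{π(i)} is at most n^{n−2}. (Equivalently: for type III commode quasi-homogeneous functions, each non-degenerate value of the Henry–Parusiński invariant is realized by at most n^{n−2} distinct analytic equivalence classes.) -/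

import Mathlib

/-!
A polynomial `Q` of degree `n` with `Q' = n ∏ (X - uₖ)` is `n P + Q(0)`, where `P` is the
antiderivative of `∏ (X - uₖ)` vanishing at the origin. When `∏ λⱼ` is fixed, so is `Q(0)`, and
prescribing distinct critical values amounts to the `n - 1` equations `P(uₖ) = aₖ` with distinct
`aₖ`, each homogeneous of degree `n` in the `n - 1` unknowns `u`. The roots of unity act on the
solutions, and equivalence classes of `λ` are orbits of solutions.

Modulo translation we may assume `∑ uₖ = 0`; what remains is one linear equation and `n - 2`
equations `P(uₖ) - P(uₖ₀) = aₖ - aₖ₀` of degree `n`. All zeros of this system are nondegenerate: a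
vector in the kernel of the Jacobian is a variation of `u` under which `P` varies by a polynomial
of degree less than `n - 1` taking equal values at the `n - 1` distinct points `uₖ`, that is, by a
constant. By Bézout there are at most `n ^ (n - 2)` centred solutions; each has at most `n`
translates solving the original system, and the action is free away from `u = 0`.

Bézout's bound for nondegenerate zeros `p₁, …, p_N` of `f` comes from counting dimensions: if `gⱼ`
vanishes at all `pᵢ` but `pⱼ`, then the lowest order terms at the `pᵢ` show that `∑ cⱼ(f) gⱼ = 0`
only for `c = 0`. Hence `N` copies of the polynomials of weighted degree at most `s`, with weights
`deg fₖ`, embed into the polynomials of degree at most `s + O(1)`; let `s → ∞`.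
-/

open Polynomial Lagrange

section Simplex

variable {σ : Type*} [Fintype σ]

theorem ncard_degree_le_le_mul_ncard_weight_le {d : σ → ℕ} (hd : ∀ i, d i ≠ 0) (s : ℕ) :
    {β : σ →₀ ℕ | Finsupp.degree β ≤ s}.ncard ≤
      (∏ i, d i) * {α : σ →₀ ℕ | Finsupp.weight d α ≤ s}.ncard := by
  let divMod (β : σ →₀ ℕ) : (∀ i, Fin (d i)) × (σ →₀ ℕ) :=
    (fun i => ⟨β i % d i, Nat.mod_lt _ (hd i).bot_lt⟩,
      Finsupp.equivFunOnFinite.symm fun i => β i / d i)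
  have divMod_injective : Function.Injective divMod := by
    intro β γ h
    simp only [divMod, Prod.mk.injEq, funext_iff, Fin.mk.injEq, EmbeddingLike.apply_eq_iff_eq] at h
    ext i
    rw [← Nat.div_add_mod (β i) (d i), ← Nat.div_add_mod (γ i) (d i), h.1 i, h.2 i]
  have weight_divMod_le (β : σ →₀ ℕ) : Finsupp.weight d (divMod β).2 ≤ Finsupp.degree β := by
    rw [Finsupp.weight_apply, Finsupp.sum_fintype _ _ (by simp), Finsupp.degree_eq_sum]
    exact Finset.sum_le_sum fun i _ => Nat.div_mul_le_self (β i) (d i)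
  have finite_weight_le := Finsupp.finite_of_nat_weight_le d hd s
  calc {β : σ →₀ ℕ | Finsupp.degree β ≤ s}.ncard
      ≤ ((Set.univ : Set (∀ i, Fin (d i))) ×ˢ {α : σ →₀ ℕ | Finsupp.weight d α ≤ s}).ncard :=
        Set.ncard_le_ncard_of_injOn divMod
          (fun β hβ => ⟨trivial, (weight_divMod_le β).trans hβ⟩)
          divMod_injective.injOn (Set.finite_univ.prod finite_weight_le)
    _ = (∏ i, d i) * {α : σ →₀ ℕ | Finsupp.weight d α ≤ s}.ncard := by
        simp only [Set.ncard_prod, Set.ncard_univ, Nat.card_pi, Nat.card_fin]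

theorem ncard_degree_le_le_pow (s : ℕ) :
    {β : σ →₀ ℕ | Finsupp.degree β ≤ s}.ncard ≤ (s + 1) ^ Fintype.card σ := by
  rw [← Nat.card_coe_set_eq, ← Nat.card_fin (s + 1), ← Nat.card_eq_fintype_card, ← Nat.card_fun]
  refine Nat.card_le_card_of_injective
    (fun β i => ⟨β.1 i, Nat.lt_succ_of_le ((Finsupp.le_degree i _).trans β.2)⟩) fun β γ h => ?_
  ext i
  exact congrArg Fin.val (congrFun h i)

end Simplex

theorem le_of_pow_le_pow_mul_pow {a b c m : ℕ} (h : ∀ k : ℕ, a ^ k ≤ b ^ k * (k * c + 1) ^ m) :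
    a ≤ b := by
  by_contra! hba
  have ha : (0 : ℝ) < a := by exact_mod_cast (Nat.zero_le b).trans_lt hba
  have hb : (0 : ℝ) < b := by
    rcases Nat.eq_zero_or_pos b with rfl | hb
    · exact absurd (h 1) (by simpa using hba.ne')
    · exact_mod_cast hb
  have one_lt_ratio : (1 : ℝ) < a / b := (one_lt_div hb).mpr (by exact_mod_cast hba)
  have hc : (0 : ℝ) < ((c + 1 : ℝ) ^ m)⁻¹ := by positivity
  obtain ⟨k, k_pos, hk⟩ := ((Filter.eventually_gt_atTop 0).and
    ((tendsto_pow_const_div_const_pow_of_one_lt m one_lt_ratio).eventually_lt_const hc)).exists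
  have hk1 : (1 : ℝ) ≤ k := by exact_mod_cast k_pos
  refine hk.not_ge ?_
  rw [div_pow, div_div_eq_mul_div, inv_eq_one_div, div_le_div_iff₀ (by positivity) (by positivity),
    one_mul]
  calc (a : ℝ) ^ k ≤ b ^ k * (k * c + 1) ^ m := by exact_mod_cast h k
    _ ≤ b ^ k * (k * (c + 1)) ^ m := by gcongr; linarith
    _ = k ^ m * b ^ k * (c + 1) ^ m := by rw [mul_pow]; ring

theorem le_of_mul_le_mul_add {a b e m : ℕ} {H : ℕ → ℕ} (hH : ∀ s, a * H s ≤ b * H (s + e))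
    (hH_pos : 0 < H 0) (hH_le : ∀ s, H s ≤ (s + 1) ^ m) : a ≤ b := by
  refine le_of_pow_le_pow_mul_pow (c := e) (m := m) fun k => ?_
  have iterated : a ^ k * H 0 ≤ b ^ k * H (k * e) := by
    induction k with
    | zero => simp
    | succ k ih =>
      calc a ^ (k + 1) * H 0 = a * (a ^ k * H 0) := by ring
        _ ≤ a * (b ^ k * H (k * e)) := by gcongr
        _ = b ^ k * (a * H (k * e)) := by ring
        _ ≤ b ^ k * (b * H (k * e + e)) := by grw [hH (k * e)]
        _ = b ^ (k + 1) * H ((k + 1) * e) := by ring_nf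
  calc a ^ k ≤ a ^ k * H 0 := Nat.le_mul_of_pos_right _ hH_pos
    _ ≤ b ^ k * H (k * e) := iterated
    _ ≤ b ^ k * (k * e + 1) ^ m := by grw [hH_le (k * e)]

section Line

variable {K σ : Type*} [CommRing K]

/-- The algebra homomorphism restricting a polynomial on the affine space `σ → K` to the
parametrised line `t ↦ p + t ξ`. -/
noncomputable def restrictLine (p ξ : σ → K) : MvPolynomial σ K →ₐ[K] K[X] :=
  MvPolynomial.aeval fun i => C (p i) + C (ξ i) * X

theorem coeff_zero_restrictLine (p ξ : σ → K) (g : MvPolynomial σ K) :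
    (restrictLine p ξ g).coeff 0 = MvPolynomial.eval p g := by
  induction g using MvPolynomial.induction_on with
  | C a => simp [restrictLine]
  | add g h hg hh => simp only [map_add, coeff_add, hg, hh]
  | mul_X g i hg =>
    rw [map_mul, mul_coeff_zero, hg, map_mul]
    simp [restrictLine]

theorem coeff_one_restrictLine [Fintype σ] (p ξ : σ → K) (g : MvPolynomial σ K) :
    (restrictLine p ξ g).coeff 1 =
      ∑ i, MvPolynomial.eval p (MvPolynomial.pderiv i g) * ξ i := by
  classical
  induction g using MvPolynomial.induction_on with
  | C a => simp [restrictLine]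
  | add g h hg hh => simp only [map_add, coeff_add, hg, hh, add_mul, Finset.sum_add_distrib]
  | mul_X g i hg =>
    have hX : restrictLine p ξ (MvPolynomial.X i) = C (p i) + C (ξ i) * X := by
      simp [restrictLine]
    rw [map_mul, mul_coeff_one, hg, coeff_zero_restrictLine, hX]
    simp [MvPolynomial.pderiv_X, Pi.single_apply, apply_ite, add_mul, Finset.sum_add_distrib,
      Finset.sum_mul, mul_right_comm, mul_comm (p i), add_comm]

end Line

theorem aeval_mul_of_isHomogeneous {K σ A : Type*} [CommSemiring K] [CommSemiring A]
    [Algebra K A] {c : MvPolynomial σ K} {m : ℕ} (hc : c.IsHomogeneous m) (a : A) (h : σ → A) :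
    MvPolynomial.aeval (fun i => a * h i) c = a ^ m * MvPolynomial.aeval h c := by
  rw [MvPolynomial.aeval_def, MvPolynomial.aeval_def, MvPolynomial.eval₂_eq, MvPolynomial.eval₂_eq,
    Finset.mul_sum]
  refine Finset.sum_congr rfl fun α hα => ?_
  rw [Finset.prod_congr rfl fun i _ => mul_pow a (h i) (α i), Finset.prod_mul_distrib,
    Finset.prod_pow_eq_pow_sum, ← hc.degree_eq_sum_deg_support hα, mul_left_comm]

theorem exists_aeval_X_mul_eq {K σ : Type*} [CommRing K] {c : MvPolynomial σ K} {s : ℕ}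
    (hc : ∀ m < s, MvPolynomial.homogeneousComponent m c = 0) (h : σ → K[X]) :
    ∃ q : K[X], MvPolynomial.aeval (fun i => X * h i) c = X ^ s * q ∧
      q.eval 0 = MvPolynomial.eval (fun i => (h i).eval 0)
        (MvPolynomial.homogeneousComponent s c) := by
  let q : K[X] := ∑ m ∈ Finset.range (c.totalDegree + 1),
    X ^ (m - s) * MvPolynomial.aeval h (MvPolynomial.homogeneousComponent m c)
  refine ⟨q, ?_, ?_⟩
  · conv_lhs => rw [← MvPolynomial.sum_homogeneousComponent c]
    rw [map_sum, Finset.mul_sum]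
    refine Finset.sum_congr rfl fun m _ => ?_
    rcases lt_or_ge m s with hm | hm
    · simp only [hc m hm, map_zero, mul_zero]
    · rw [← mul_assoc, ← pow_add, Nat.add_sub_cancel' hm]
      exact aeval_mul_of_isHomogeneous (MvPolynomial.homogeneousComponent_isHomogeneous m c) X h
  · have eval_aeval (g : MvPolynomial σ K) :
        (MvPolynomial.aeval h g).eval 0 = MvPolynomial.eval (fun i => (h i).eval 0) g := by
      simpa [coe_aeval_eq_eval, MvPolynomial.aeval_eq_eval] using
        MvPolynomial.comp_aeval_apply h (Polynomial.aeval (R := K) (0 : K)) g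
    simp only [q, eval_finsetSum, eval_mul, eval_pow, eval_X, eval_aeval]
    rw [Finset.sum_eq_single s]
    · simp
    · intro m _ hms
      rcases hms.lt_or_gt with hm | hm
      · simp only [hc m hm, map_zero, mul_zero]
      · rw [zero_pow (Nat.sub_ne_zero_of_lt hm), zero_mul]
    · intro hs
      rw [MvPolynomial.homogeneousComponent_eq_zero _ _ (by simpa using hs), map_zero, mul_zero]

theorem totalDegree_aeval_le_of_weight_le {K σ τ : Type*} [CommSemiring K]
    (f : σ → MvPolynomial τ K) {a : MvPolynomial σ K} {s : ℕ}
    (ha : a ∈ MvPolynomial.restrictSupport K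
      {α | Finsupp.weight (fun i => (f i).totalDegree) α ≤ s}) :
    (MvPolynomial.aeval f a).totalDegree ≤ s := by
  rw [MvPolynomial.aeval_def, MvPolynomial.eval₂_eq]
  refine MvPolynomial.totalDegree_finsetSum_le fun α hα => ?_
  calc _ ≤ ∑ i ∈ α.support, α i * (f i).totalDegree := by
        rw [MvPolynomial.algebraMap_eq]
        refine (MvPolynomial.totalDegree_mul _ _).trans ?_
        rw [MvPolynomial.totalDegree_C, zero_add]
        exact (MvPolynomial.totalDegree_finsetProd _ _).trans
          (Finset.sum_le_sum fun i _ => MvPolynomial.totalDegree_pow _ _)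
    _ = Finsupp.weight (fun i => (f i).totalDegree) α := by
        rw [Finsupp.weight_apply]; rfl
    _ ≤ s := (MvPolynomial.mem_restrictSupport_iff K).mp ha hα

theorem exists_eval_eq_zero_iff_ne {K σ ι : Type*} [CommRing K] [IsDomain K] [Finite ι]
    {p : ι → σ → K} (hp : Function.Injective p) (j : ι) :
    ∃ g : MvPolynomial σ K, ∀ i, MvPolynomial.eval (p i) g = 0 ↔ i ≠ j := by
  classical
  have := Fintype.ofFinite ι
  choose k hk using fun i : {i // i ≠ j} => Function.ne_iff.mp (hp.ne i.2)
  refine ⟨∏ i : {i // i ≠ j}, (MvPolynomial.X (k i) - MvPolynomial.C (p i (k i))), fun i => ?_⟩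
  simp only [map_prod, map_sub, MvPolynomial.eval_X, MvPolynomial.eval_C, Finset.prod_eq_zero_iff,
    Finset.mem_univ, true_and, sub_eq_zero]
  refine ⟨?_, fun hij => ⟨⟨i, hij⟩, rfl⟩⟩
  rintro ⟨a, ha⟩ rfl
  exact hk a ha.symm

theorem finrank_restrictSupport {K σ : Type*} [Field K] (A : Set (σ →₀ ℕ)) :
    Module.finrank K (MvPolynomial.restrictSupport K A) = A.ncard :=
  Module.finrank_eq_nat_card_basis (MvPolynomial.basisRestrictSupport K A)

section Jacobian

variable {K σ : Type*} [Field K]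

/-- The Jacobian matrix at the point `x` of the system `f` of polynomials. -/
noncomputable def jacobianMatrix {τ : Type*} (f : τ → MvPolynomial σ K) (x : σ → K) :
    Matrix τ σ K :=
  Matrix.of fun i j => MvPolynomial.eval x (MvPolynomial.pderiv j (f i))

variable [Fintype σ]

theorem exists_restrictLine_eq_X_mul {f : σ → MvPolynomial σ K} {p : σ → K}
    (hp : ∀ i, MvPolynomial.eval p (f i) = 0) (ξ : σ → K) :
    ∃ h : σ → K[X], (∀ i, restrictLine p ξ (f i) = X * h i) ∧
      (fun i => (h i).eval 0) = (jacobianMatrix f p).mulVec ξ := by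
  refine ⟨fun i => (restrictLine p ξ (f i)).divX, fun i => ?_, funext fun i => ?_⟩
  · conv_lhs =>
      rw [← X_mul_divX_add (restrictLine p ξ (f i)), coeff_zero_restrictLine, hp i, C_0, add_zero]
  · rw [← coeff_zero_eq_eval_zero, coeff_divX, coeff_one_restrictLine]
    rfl

variable {ι : Type*} [Fintype ι] {f : σ → MvPolynomial σ K} {p : ι → σ → K}
  {g c : ι → MvPolynomial σ K}

theorem sum_eval_homogeneousComponent_mul_eq_zero
    (hsum : ∑ j, MvPolynomial.aeval f (c j) * g j = 0) {s : ℕ}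
    (hc : ∀ j, ∀ m < s, MvPolynomial.homogeneousComponent m (c j) = 0) {x : σ → K}
    (hx : ∀ i, MvPolynomial.eval x (f i) = 0) (ξ : σ → K) :
    ∑ j, MvPolynomial.eval ((jacobianMatrix f x).mulVec ξ)
      (MvPolynomial.homogeneousComponent s (c j)) * MvPolynomial.eval x (g j) = 0 := by
  obtain ⟨h, hf, hJ⟩ := exists_restrictLine_eq_X_mul hx ξ
  choose q hq hq_zero using fun j => exists_aeval_X_mul_eq (hc j) h
  have factored : X ^ s * ∑ j, q j * restrictLine x ξ (g j) = 0 := by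
    rw [Finset.mul_sum, ← map_zero (restrictLine x ξ), ← hsum, map_sum]
    refine Finset.sum_congr rfl fun j _ => ?_
    rw [map_mul, MvPolynomial.comp_aeval_apply, funext hf, hq, mul_assoc]
  have at_zero := congrArg (eval 0)
    ((mul_eq_zero.mp factored).resolve_left (pow_ne_zero s X_ne_zero))
  simpa only [eval_finsetSum, eval_mul, eval_zero, hq_zero, hJ,
    ← coeff_zero_eq_eval_zero (restrictLine _ _ _), coeff_zero_restrictLine] using at_zero

theorem eq_zero_of_sum_aeval_mul_eq_zero [Infinite K] [DecidableEq σ]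
    (hzero : ∀ i k, MvPolynomial.eval (p i) (f k) = 0)
    (hdet : ∀ i, (jacobianMatrix f (p i)).det ≠ 0)
    (hg : ∀ i j, MvPolynomial.eval (p i) (g j) = 0 ↔ i ≠ j)
    (hsum : ∑ j, MvPolynomial.aeval f (c j) * g j = 0) (j : ι) : c j = 0 := by
  suffices h : ∀ s j, MvPolynomial.homogeneousComponent s (c j) = 0 by
    rw [← MvPolynomial.sum_homogeneousComponent (c j)]
    exact Finset.sum_eq_zero fun s _ => h s j
  intro s
  induction s using Nat.strong_induction_on with
  | _ s ih =>
    intro i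
    refine MvPolynomial.funext fun y => ?_
    have hJ : (jacobianMatrix f (p i)).mulVec ((jacobianMatrix f (p i))⁻¹.mulVec y) = y := by
      rw [Matrix.mulVec_mulVec, Matrix.mul_nonsing_inv _ (hdet i).isUnit, Matrix.one_mulVec]
    have hsum_i := sum_eval_homogeneousComponent_mul_eq_zero hsum (fun j m hm => ih m hm j)
      (hzero i) ((jacobianMatrix f (p i))⁻¹.mulVec y)
    rw [hJ, Finset.sum_eq_single i
      (fun j _ hji => by rw [(hg i j).mpr hji.symm, mul_zero]) (by simp)] at hsum_i
    rw [map_zero]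
    exact (mul_eq_zero.mp hsum_i).resolve_right fun h => (hg i i).mp h rfl

theorem card_mul_ncard_weight_le [Infinite K] [DecidableEq σ]
    (hzero : ∀ i k, MvPolynomial.eval (p i) (f k) = 0)
    (hdet : ∀ i, (jacobianMatrix f (p i)).det ≠ 0)
    (hg : ∀ i j, MvPolynomial.eval (p i) (g j) = 0 ↔ i ≠ j)
    (hpos : ∀ i, (f i).totalDegree ≠ 0) {e : ℕ} (he : ∀ i, (g i).totalDegree ≤ e) (s : ℕ) :
    Fintype.card ι * {α : σ →₀ ℕ | Finsupp.weight (fun i => (f i).totalDegree) α ≤ s}.ncard ≤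
      {β : σ →₀ ℕ | Finsupp.degree β ≤ s + e}.ncard := by
  let W := MvPolynomial.restrictSupport K
    {α : σ →₀ ℕ | Finsupp.weight (fun i => (f i).totalDegree) α ≤ s}
  have : Module.Finite K W :=
    have := (Finsupp.finite_of_nat_weight_le _ hpos s).to_subtype
    Module.Finite.of_basis (MvPolynomial.basisRestrictSupport K _)
  let Φ : (ι → W) →ₗ[K] MvPolynomial σ K :=
    ∑ j, (LinearMap.mulRight K (g j)) ∘ₗ (MvPolynomial.aeval f).toLinearMap ∘ₗ W.subtype ∘ₗ
      LinearMap.proj j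
  have Φ_apply (c : ι → W) : Φ c = ∑ j, MvPolynomial.aeval f (c j : MvPolynomial σ K) * g j := by
    simp [Φ]
  have Φ_mem (c : ι → W) : Φ c ∈ MvPolynomial.restrictTotalDegree σ K (s + e) := by
    rw [MvPolynomial.mem_restrictTotalDegree, Φ_apply]
    exact MvPolynomial.totalDegree_finsetSum_le fun j _ => (MvPolynomial.totalDegree_mul _ _).trans
      (add_le_add (totalDegree_aeval_le_of_weight_le f (c j).2) (he j))
  have Φ_injective : Function.Injective (Φ.codRestrict _ Φ_mem) := by
    refine (injective_iff_map_eq_zero _).mpr fun c hc => funext fun j => Subtype.ext ?_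
    refine eq_zero_of_sum_aeval_mul_eq_zero (c := fun j => (c j).1) hzero hdet hg ?_ j
    rw [← Φ_apply]
    exact congrArg Subtype.val hc
  calc _ = Module.finrank K (ι → W) := by
        rw [Module.finrank_pi_fintype, Finset.sum_const, Finset.card_univ, smul_eq_mul,
          finrank_restrictSupport]
    _ ≤ Module.finrank K (MvPolynomial.restrictTotalDegree σ K (s + e)) :=
        LinearMap.finrank_le_finrank_of_injective Φ_injective
    _ = _ := finrank_restrictSupport _

theorem card_nondegenerate_zeros_le [Infinite K] [DecidableEq σ] (hp : Function.Injective p)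
    (hzero : ∀ i k, MvPolynomial.eval (p i) (f k) = 0)
    (hdet : ∀ i, (jacobianMatrix f (p i)).det ≠ 0) :
    Fintype.card ι ≤ ∏ k, (f k).totalDegree := by
  rcases isEmpty_or_nonempty ι with hι | ⟨⟨i⟩⟩
  · simp
  have hpos (k : σ) : (f k).totalDegree ≠ 0 := fun hk =>
    hdet i <| Matrix.det_eq_zero_of_row_eq_zero k fun j => by
      rw [jacobianMatrix, Matrix.of_apply, MvPolynomial.totalDegree_eq_zero_iff_eq_C.mp hk,
        MvPolynomial.pderiv_C, map_zero]
  choose g hg using exists_eval_eq_zero_iff_ne hp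
  let e := Finset.univ.sup fun j => (g j).totalDegree
  let H (s : ℕ) := {β : σ →₀ ℕ | Finsupp.degree β ≤ s}.ncard
  have growth (s : ℕ) : Fintype.card ι * H s ≤ (∏ k, (f k).totalDegree) * H (s + e) :=
    calc Fintype.card ι * H s
        ≤ Fintype.card ι * ((∏ k, (f k).totalDegree) *
            {α : σ →₀ ℕ | Finsupp.weight (fun i => (f i).totalDegree) α ≤ s}.ncard) := by
          gcongr
          exact ncard_degree_le_le_mul_ncard_weight_le hpos s
      _ = (∏ k, (f k).totalDegree) * (Fintype.card ι * _) := mul_left_comm _ _ _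
      _ ≤ (∏ k, (f k).totalDegree) * H (s + e) := by
          gcongr
          exact card_mul_ncard_weight_le hzero hdet (fun i j => hg j i) hpos
            (fun j => Finset.le_sup (f := fun j => (g j).totalDegree) (Finset.mem_univ j)) s
  refine le_of_mul_le_mul_add growth ?_ ncard_degree_le_le_pow
  exact (Set.ncard_pos (Finsupp.finite_of_degree_le 0)).mpr ⟨0, by simp⟩

theorem encard_nondegenerate_zeros_le [Infinite K] [DecidableEq σ] (f : σ → MvPolynomial σ K) :
    {x : σ → K | (∀ k, MvPolynomial.eval x (f k) = 0) ∧ (jacobianMatrix f x).det ≠ 0}.encard ≤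
      (∏ k, (f k).totalDegree : ℕ) := by
  by_contra! h
  obtain ⟨t, ht, ht_card⟩ := Set.exists_subset_encard_eq (Order.add_one_le_of_lt h)
  have := (Set.finite_of_encard_eq_coe (k := (∏ k, (f k).totalDegree) + 1)
    (by exact_mod_cast ht_card)).fintype
  have card_le := card_nondegenerate_zeros_le (ι := t) (p := Subtype.val) Subtype.val_injective
    (fun i => (ht i.2).1) (fun i => (ht i.2).2)
  rw [Set.encard_eq_coe_toFinset_card, Set.toFinset_card] at ht_card
  norm_cast at ht_card
  omega

end Jacobian

section Antiderivative

variable {A B : Type*} [CommRing A] [CommRing B] [Algebra ℚ A] [Algebra ℚ B]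

/-- The antiderivative of a polynomial with zero constant term. -/
noncomputable def antideriv : A[X] →ₗ[A] A[X] :=
  Polynomial.lsum fun j => ((j + 1 : ℚ)⁻¹) • monomial (j + 1)

theorem coeff_antideriv_zero (p : A[X]) : (antideriv p).coeff 0 = 0 := by
  simp [antideriv, lsum_apply, sum_def, coeff_monomial]

theorem coeff_antideriv_succ (p : A[X]) (j : ℕ) :
    (antideriv p).coeff (j + 1) = (j + 1 : ℚ)⁻¹ • p.coeff j := by
  simp only [antideriv, lsum_apply, sum_def, LinearMap.smul_apply, finsetSum_coeff, coeff_smul,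
    coeff_monomial, Nat.add_right_cancel_iff]
  rw [Finset.sum_eq_single j]
  · simp
  · intro i _ hij
    simp [hij]
  · intro hj
    simp [notMem_support_iff.mp hj]

theorem inv_smul_mul_succ (j : ℕ) (a : A) : (j + 1 : ℚ)⁻¹ • (a * (j + 1)) = a := by
  rw [Algebra.smul_def, mul_left_comm, ← map_natCast (algebraMap ℚ A) j,
    ← map_one (algebraMap ℚ A), ← map_add, ← map_mul, inv_mul_cancel₀ (by positivity), map_one,
    mul_one]

theorem derivative_antideriv (p : A[X]) : derivative (antideriv p) = p := by
  ext j
  rw [coeff_derivative, coeff_antideriv_succ, smul_mul_assoc, inv_smul_mul_succ]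

theorem antideriv_derivative (p : A[X]) : antideriv (derivative p) = p - C (p.coeff 0) := by
  ext (_ | j)
  · simp [coeff_antideriv_zero]
  · rw [coeff_antideriv_succ, coeff_derivative, inv_smul_mul_succ, coeff_sub, coeff_C_succ,
      sub_zero]

theorem map_antideriv (φ : A →+* B) (p : A[X]) : (antideriv p).map φ = antideriv (p.map φ) := by
  ext (_ | j)
  · simp [coeff_antideriv_zero]
  · simp only [coeff_map, coeff_antideriv_succ, map_rat_smul]

theorem degree_antideriv_lt {p : A[X]} {m : ℕ} (hp : p.degree < m) :
    (antideriv p).degree < (m + 1 : ℕ) := by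
  rw [degree_lt_iff_coeff_zero] at hp ⊢
  rintro (_ | j) hj
  · exact coeff_antideriv_zero p
  · rw [coeff_antideriv_succ, hp j (by omega), smul_zero]

end Antiderivative

theorem derivation_finsetProd {R A M ι : Type*} [CommSemiring R] [CommSemiring A]
    [AddCommMonoid M] [Algebra R A] [Module A M] [Module R M] [DecidableEq ι]
    (D : Derivation R A M) (s : Finset ι) (f : ι → A) :
    D (∏ i ∈ s, f i) = ∑ i ∈ s, (∏ j ∈ s.erase i, f j) • D (f i) := by
  induction s using Finset.induction_on with
  | empty => simp
  | insert a s ha ih =>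
    rw [Finset.prod_insert ha, D.leibniz, ih, Finset.sum_insert ha, Finset.erase_insert ha,
      Finset.smul_sum, add_comm]
    congr 1
    refine Finset.sum_congr rfl fun i hi => ?_
    have hai : a ≠ i := fun h => ha (h ▸ hi)
    rw [smul_smul, Finset.erase_insert_of_ne hai,
      Finset.prod_insert fun h => ha (Finset.mem_of_mem_erase h)]

section CoeffDerivation

variable {R A : Type*} [CommRing R] [CommRing A] [Algebra R A] (D : Derivation R A A)

/-- The derivation of `A[X]` applying a derivation of `A` to each coefficient. -/
noncomputable def coeffDerivation : Derivation R A[X] A[X] :=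
  PolynomialModule.equivPolynomialSelf.compDer D.mapCoeffs

theorem coeff_coeffDerivation (p : A[X]) (i : ℕ) :
    (coeffDerivation D p).coeff i = D (p.coeff i) := rfl

theorem coeffDerivation_C (a : A) : coeffDerivation D (C a) = C (D a) := by
  ext (_ | i) <;> simp only [coeff_coeffDerivation, coeff_C_zero, coeff_C_succ, map_zero]

theorem coeffDerivation_X : coeffDerivation D X = 0 := by
  ext i
  simp only [coeff_coeffDerivation, coeff_X, apply_ite D, D.map_one_eq_zero, map_zero, ite_self,
    coeff_zero]

theorem coeffDerivation_antideriv [Algebra ℚ A] (p : A[X]) :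
    coeffDerivation D (antideriv p) = antideriv (coeffDerivation D p) := by
  ext (_ | i)
  · simp only [coeff_coeffDerivation, coeff_antideriv_zero, map_zero]
  · simp only [coeff_coeffDerivation, coeff_antideriv_succ, map_rat_smul]

theorem derivation_eval (p : A[X]) (a : A) :
    D (p.eval a) = (coeffDerivation D p).eval a + (derivative p).eval a * D a := by
  induction p using Polynomial.induction_on' with
  | add p q hp hq => simp only [eval_add, map_add, hp, hq]; ring
  | monomial j b =>
    rw [← C_mul_X_pow_eq_monomial, Derivation.leibniz, Derivation.leibniz_pow, coeffDerivation_C,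
      coeffDerivation_X, eval_mul, eval_C, D.leibniz, eval_pow, eval_X, D.leibniz_pow]
    simp only [smul_eq_mul, nsmul_eq_mul, smul_zero, mul_zero, zero_add, eval_mul, eval_pow, eval_X,
      eval_C, derivative_mul, derivative_C, zero_mul, derivative_X_pow, add_comm]
    ring

end CoeffDerivation

section CriticalValues

variable {κ A B : Type*} [Fintype κ] [CommRing A] [CommRing B] [Algebra ℚ A] [Algebra ℚ B]

/-- The value at its critical point `u k` of the polynomial with derivative `∏ l, (X - u l)` which
vanishes at the origin. -/
noncomputable def critVal (u : κ → A) (k : κ) : A :=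
  (antideriv (nodal Finset.univ u)).eval (u k)

theorem map_critVal (φ : A →+* B) (u : κ → A) (k : κ) :
    φ (critVal u k) = critVal (fun l => φ (u l)) k := by
  rw [critVal, critVal, ← eval_map_apply, map_antideriv, nodal, Polynomial.map_prod]
  simp [nodal]

theorem critVal_add_const (u : κ → A) (c : A) (k : κ) :
    critVal (fun l => u l + c) k = critVal u k - (antideriv (nodal Finset.univ u)).eval (-c) := by
  have hcomp : nodal Finset.univ (fun l => u l + c) =
      (nodal Finset.univ u).comp (X - C c) := by
    simp [nodal, prod_comp, sub_sub, add_comm]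
  have hderiv : nodal Finset.univ (fun l => u l + c) =
      derivative ((antideriv (nodal Finset.univ u)).comp (X - C c)) := by
    rw [hcomp, derivative_comp, derivative_antideriv]
    simp
  rw [critVal, hderiv, antideriv_derivative, coeff_zero_eq_eval_zero]
  simp [critVal, eval_comp]

theorem derivation_critVal {R : Type*} [CommRing R] [Algebra R A] [DecidableEq κ]
    (D : Derivation R A A) (u : κ → A) (k : κ) :
    D (critVal u k) = -(antideriv
      (∑ j, C (D (u j)) * nodal (Finset.univ.erase j) u)).eval (u k) := by
  rw [critVal, derivation_eval, derivative_antideriv, eval_nodal_at_node (Finset.mem_univ k),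
    zero_mul, add_zero, coeffDerivation_antideriv, nodal, derivation_finsetProd,
    ← eval_neg, ← map_neg, ← Finset.sum_neg_distrib]
  simp [coeffDerivation_C, coeffDerivation_X, nodal, mul_comm]

end CriticalValues

section CriticalValuesField

variable {K κ : Type*} [Field K] [CharZero K] [Fintype κ]

theorem eval_pderiv_critVal_X [DecidableEq κ] (w : κ → K) (k j : κ) :
    MvPolynomial.eval w (MvPolynomial.pderiv j (critVal MvPolynomial.X k)) =
      -(antideriv (nodal (Finset.univ.erase j) w)).eval (w k) := by
  have pderiv_eq : MvPolynomial.pderiv j (critVal MvPolynomial.X k) =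
      -(antideriv (nodal (Finset.univ.erase j) (MvPolynomial.X (R := K)))).eval
        (MvPolynomial.X k) := by
    rw [derivation_critVal, Finset.sum_eq_single j
      (fun l _ hlj => by rw [MvPolynomial.pderiv_X_of_ne hlj, C_0, zero_mul]) (by simp),
      MvPolynomial.pderiv_X_self, C_1, one_mul]
  rw [pderiv_eq, map_neg, ← eval_map_apply, map_antideriv, nodal, Polynomial.map_prod]
  simp [nodal]

theorem isHomogeneous_critVal_X (k : κ) :
    (critVal (MvPolynomial.X (R := K)) k).IsHomogeneous (Fintype.card κ + 1) := by
  have isHomogeneous_coeff (i : ℕ) (hi : i ≤ Fintype.card κ) :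
      ((nodal Finset.univ (MvPolynomial.X (σ := κ) (R := K))).coeff i).IsHomogeneous
        (Fintype.card κ - i) := by
    simp only [nodal, sub_eq_add_neg, ← C_neg]
    rw [Finset.prod_X_add_C_coeff _ _ hi]
    refine MvPolynomial.IsHomogeneous.sum _ _ _ fun t ht => ?_
    have := MvPolynomial.IsHomogeneous.prod t (fun i => -MvPolynomial.X (R := K) i) (fun _ => 1)
      fun i _ => (MvPolynomial.isHomogeneous_X K i).neg
    rwa [Finset.sum_const, smul_eq_mul, mul_one, (Finset.mem_powersetCard.mp ht).2] at this
  rw [critVal, eval_eq_sum, sum_def]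
  refine MvPolynomial.IsHomogeneous.sum _ _ _ fun i _ => ?_
  rcases i with _ | i
  · rw [coeff_antideriv_zero, zero_mul]
    exact MvPolynomial.isHomogeneous_zero _ _ _
  rw [coeff_antideriv_succ, ← algebraMap_smul K, smul_mul_assoc]
  refine (MvPolynomial.homogeneousSubmodule κ K _).smul_mem _ ?_
  rcases le_or_gt i (Fintype.card κ) with hi | hi
  · have := (isHomogeneous_coeff i hi).mul ((MvPolynomial.isHomogeneous_X K k).pow (i + 1))
    rwa [one_mul, ← add_assoc, Nat.sub_add_cancel hi] at this
  · rw [coeff_eq_zero_of_natDegree_lt (by rwa [natDegree_nodal, Finset.card_univ]), zero_mul]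
    exact MvPolynomial.isHomogeneous_zero _ _ _

theorem eval_critVal_X (w : κ → K) (k : κ) :
    MvPolynomial.eval w (critVal MvPolynomial.X k) = critVal w k := by
  simp only [map_critVal, MvPolynomial.eval_X]

theorem critVal_smul (a : K) (u : κ → K) (k : κ) :
    critVal (a • u) k = a ^ (Fintype.card κ + 1) * critVal u k := by
  have h := aeval_mul_of_isHomogeneous (isHomogeneous_critVal_X (K := K) k) a u
  simp only [MvPolynomial.aeval_eq_eval, eval_critVal_X] at h
  exact h

theorem eq_zero_of_eval_antideriv_eq [DecidableEq κ] {w v : κ → K} (hw : Function.Injective w)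
    (hv : ∑ j, v j = 0) {c : K}
    (hc : ∀ k, (antideriv (∑ j, C (v j) * nodal (Finset.univ.erase j) w)).eval (w k) = c) :
    v = 0 := by
  set V := ∑ j, C (v j) * nodal (Finset.univ.erase j) w with V_def
  rcases isEmpty_or_nonempty κ with hκ | hκ
  · exact Subsingleton.elim _ _
  obtain ⟨M, hM⟩ := Nat.exists_eq_add_one.mpr (Fintype.card_pos (α := κ))
  have natDegree_nodal_erase (j : κ) : (nodal (Finset.univ.erase j) w).natDegree = M := by
    rw [natDegree_nodal, Finset.card_erase_of_mem (Finset.mem_univ j), Finset.card_univ, hM,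
      Nat.add_sub_cancel]
  have degree_V : V.degree < M := by
    rw [degree_lt_iff_coeff_zero]
    intro i hi
    simp only [V_def, finsetSum_coeff, coeff_C_mul]
    rcases hi.eq_or_lt with rfl | hi
    · simpa only [fun j => (natDegree_nodal_erase j ▸ nodal_monic.coeff_natDegree :
        (nodal (Finset.univ.erase j) w).coeff M = 1), mul_one] using hv
    · exact Finset.sum_eq_zero fun j _ => by
        rw [coeff_eq_zero_of_natDegree_lt ((natDegree_nodal_erase j).trans_lt hi), mul_zero]
  have antideriv_V : antideriv V = C c := by
    refine eq_of_degrees_lt_of_eval_index_eq Finset.univ hw.injOn ?_ ?_ fun k _ => ?_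
    · rw [Finset.card_univ, hM]
      exact degree_antideriv_lt degree_V
    · exact degree_C_le.trans_lt (by rw [Finset.card_univ]; exact_mod_cast Fintype.card_pos)
    · rw [hc, eval_C]
  have V_eq_zero : V = 0 := by
    rw [← derivative_antideriv V, antideriv_V, derivative_C]
  funext k
  have eval_V : v k * ∏ l ∈ Finset.univ.erase k, (w k - w l) = 0 := by
    have := congrArg (eval (w k)) V_eq_zero
    simp only [V_def, eval_finsetSum, eval_mul, eval_C, eval_zero] at this
    rwa [Finset.sum_eq_single k (fun j _ hjk => by
      rw [eval_nodal_at_node (Finset.mem_erase.mpr ⟨hjk.symm, Finset.mem_univ k⟩), mul_zero])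
      (by simp), eval_nodal] at this
  refine (mul_eq_zero.mp eval_V).resolve_right (Finset.prod_ne_zero_iff.mpr fun l hl => ?_)
  exact sub_ne_zero.mpr (hw.ne (Finset.ne_of_mem_erase hl).symm)

end CriticalValuesField

theorem exists_perm_of_map_univ_eq {α β : Type*} [Fintype α] {x y : α → β}
    (h : Finset.univ.val.map x = Finset.univ.val.map y) :
    ∃ π : Equiv.Perm α, ∀ i, y i = x (π i) := by
  classical
  have card_fiber_eq (b : β) : Nonempty ({i // y i = b} ≃ {i // x i = b}) := by
    refine ⟨Fintype.equivOfCardEq ?_⟩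
    have := congrArg (Multiset.count b) h
    simp only [Multiset.count_map, ← Finset.filter_val, Finset.card_val, eq_comm (a := b)] at this
    rw [Fintype.card_subtype, Fintype.card_subtype, this]
  have e (b : β) : {i // y i = b} ≃ {i // x i = b} := (card_fiber_eq b).some
  refine ⟨(Equiv.sigmaFiberEquiv y).symm.trans
    ((Equiv.sigmaCongrRight e).trans (Equiv.sigmaFiberEquiv x)), fun i => ?_⟩
  exact (e (y i) ⟨i, rfl⟩).2.symm

theorem exists_perm_of_nodal_eq {ι K : Type*} [Fintype ι] [CommRing K] [IsDomain K] {x y : ι → K}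
    (h : nodal Finset.univ x = nodal Finset.univ y) : ∃ π : Equiv.Perm ι, ∀ i, y i = x (π i) := by
  have roots_nodal (z : ι → K) : (nodal Finset.univ z).roots = Finset.univ.val.map z := by
    rw [← roots_multiset_prod_X_sub_C (Finset.univ.val.map z), Multiset.map_map]
    rfl
  exact exists_perm_of_map_univ_eq (by rw [← roots_nodal, h, roots_nodal])

theorem nodal_comp_perm {ι R : Type*} [Fintype ι] [CommRing R] (x : ι → R) (π : Equiv.Perm ι) :
    nodal Finset.univ (x ∘ π) = nodal Finset.univ x :=
  Equiv.prod_comp π fun i => X - C (x i)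

section Fibers

variable {K κ : Type*} [Field K] [CharZero K] [Fintype κ]

/-- The polynomial system for the tuples `w` of sum zero whose critical values differ from each
other as the entries of `a` do. Contrary to the system `critVal w = a`, whose Jacobian degenerates
when some `w k` is zero, it has only nondegenerate zeros if `a` is injective. -/
noncomputable def centredSystem [DecidableEq κ] (a : κ → K) (k₀ k : κ) : MvPolynomial κ K :=
  if k = k₀ then ∑ l, MvPolynomial.X l
  else critVal MvPolynomial.X k - critVal MvPolynomial.X k₀ - MvPolynomial.C (a k - a k₀)

theorem prod_totalDegree_centredSystem_le [DecidableEq κ] (a : κ → K) (k₀ : κ) :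
    ∏ k, (centredSystem a k₀ k).totalDegree ≤ (Fintype.card κ + 1) ^ (Fintype.card κ - 1) := by
  have base : (centredSystem a k₀ k₀).totalDegree ≤ 1 := by
    rw [centredSystem, if_pos rfl]
    exact (MvPolynomial.IsHomogeneous.sum _ _ _ fun l _ =>
      MvPolynomial.isHomogeneous_X K l).totalDegree_le
  have other (k : κ) (hk : k ∈ Finset.univ.erase k₀) :
      (centredSystem a k₀ k).totalDegree ≤ Fintype.card κ + 1 := by
    rw [centredSystem, if_neg (Finset.ne_of_mem_erase hk)]
    exact (MvPolynomial.totalDegree_sub_C_le _ _).trans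
      ((isHomogeneous_critVal_X k).sub (isHomogeneous_critVal_X k₀)).totalDegree_le
  rw [← Finset.mul_prod_erase _ _ (Finset.mem_univ k₀)]
  calc _ ≤ 1 * ∏ k ∈ Finset.univ.erase k₀, (Fintype.card κ + 1) :=
        Nat.mul_le_mul base (Finset.prod_le_prod' other)
    _ = _ := by
        rw [one_mul, Finset.prod_const, Finset.card_erase_of_mem (Finset.mem_univ k₀),
          Finset.card_univ]

theorem eval_centredSystem_eq_zero_iff [DecidableEq κ] {a : κ → K} {k₀ : κ} {w : κ → K} :
    (∀ k, MvPolynomial.eval w (centredSystem a k₀ k) = 0) ↔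
      ∑ l, w l = 0 ∧ ∀ k, critVal w k - critVal w k₀ = a k - a k₀ := by
  have eval_base : MvPolynomial.eval w (centredSystem a k₀ k₀) = ∑ l, w l := by
    simp [centredSystem]
  have eval_other {k : κ} (hk : k ≠ k₀) : MvPolynomial.eval w (centredSystem a k₀ k) =
      critVal w k - critVal w k₀ - (a k - a k₀) := by
    simp [centredSystem, hk, eval_critVal_X]
  refine ⟨fun h => ⟨eval_base ▸ h k₀, fun k => ?_⟩, fun h k => ?_⟩ <;> by_cases hk : k = k₀
  · rw [hk, sub_self, sub_self]
  · exact sub_eq_zero.mp (eval_other hk ▸ h k)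
  · rw [hk, eval_base, h.1]
  · rw [eval_other hk, h.2, sub_self]

theorem det_jacobianMatrix_centredSystem_ne_zero [DecidableEq κ] (a : κ → K) (k₀ : κ) {w : κ → K}
    (hw : Function.Injective w) : (jacobianMatrix (centredSystem a k₀) w).det ≠ 0 := by
  intro hdet
  obtain ⟨v, v_ne_zero, hv⟩ := Matrix.exists_mulVec_eq_zero_iff.mpr hdet
  have row (k : κ) :
      ∑ j, MvPolynomial.eval w (MvPolynomial.pderiv j (centredSystem a k₀ k)) * v j = 0 :=
    congrFun hv k
  have eval_variation (k : κ) :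
      (antideriv (∑ j, C (v j) * nodal (Finset.univ.erase j) w)).eval (w k) =
        ∑ j, (antideriv (nodal (Finset.univ.erase j) w)).eval (w k) * v j := by
    simp only [← smul_eq_C_mul, map_sum, map_smul, eval_finsetSum, eval_smul, smul_eq_mul,
      mul_comm (v _)]
  refine v_ne_zero (eq_zero_of_eval_antideriv_eq hw ?_ (c := (antideriv
    (∑ j, C (v j) * nodal (Finset.univ.erase j) w)).eval (w k₀)) fun k => ?_)
  · simpa [centredSystem, MvPolynomial.pderiv_X, Pi.single_apply] using row k₀
  · rcases eq_or_ne k k₀ with rfl | hk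
    · rfl
    have := row k
    simp only [centredSystem, if_neg hk, map_sub, MvPolynomial.pderiv_C, sub_zero,
      eval_pderiv_critVal_X, sub_mul, Finset.sum_sub_distrib, neg_mul, Finset.sum_neg_distrib,
      ← eval_variation] at this
    linear_combination -this

theorem encard_centred_critVal_fiber_le {a : κ → K} (ha : Function.Injective a) (k₀ : κ) :
    {w : κ → K | ∑ l, w l = 0 ∧ ∀ k, critVal w k - critVal w k₀ = a k - a k₀}.encard ≤
      ((Fintype.card κ + 1) ^ (Fintype.card κ - 1) : ℕ) := by
  classical
  have injective_of_mem {w : κ → K} (hw : ∀ k, critVal w k - critVal w k₀ = a k - a k₀) :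
      Function.Injective w := fun k l hkl => ha <| by
    have : critVal w k = critVal w l := by rw [critVal, critVal, hkl]
    linear_combination hw l - hw k + this
  calc _ ≤ {w : κ → K | (∀ k, MvPolynomial.eval w (centredSystem a k₀ k) = 0) ∧
          (jacobianMatrix (centredSystem a k₀) w).det ≠ 0}.encard :=
        Set.encard_le_encard fun w hw => ⟨eval_centredSystem_eq_zero_iff.mpr hw,
          det_jacobianMatrix_centredSystem_ne_zero a k₀ (injective_of_mem hw.2)⟩
    _ ≤ (∏ k, (centredSystem a k₀ k).totalDegree : ℕ) := encard_nondegenerate_zeros_le _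
    _ ≤ _ := by exact_mod_cast prod_totalDegree_centredSystem_le a k₀

/-- The tuples `u` with critical values `critVal u = a`, with the `n`-th roots of unity acting on
them by multiplication for `n = card κ + 1`. -/
def critValFiber (a : κ → K) : SubMulAction (rootsOfUnity (Fintype.card κ + 1) K) (κ → K) where
  carrier := {u | critVal u = a}
  smul_mem' ζ u hu := by
    have hζ : ((ζ : Kˣ) : K) ^ (Fintype.card κ + 1) = 1 := (mem_rootsOfUnity' _ _).mp ζ.2
    funext k
    exact (critVal_smul _ u k).trans (by rw [hζ, one_mul, ← hu])

theorem encard_eval_antideriv_eq_le {p : K[X]} (hp : p ≠ 0) (c : K) :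
    {x | (antideriv p).eval x = c}.encard ≤ (p.natDegree + 1 : ℕ) := by
  classical
  have sub_ne_zero : antideriv p - C c ≠ 0 := fun h => hp <| by
    rw [← derivative_antideriv p, sub_eq_zero.mp h, derivative_C]
  have degree_le : (antideriv p - C c).natDegree ≤ p.natDegree + 1 := by
    rw [natDegree_sub_C, natDegree_le_iff_coeff_eq_zero]
    rintro (_ | j) hj
    · exact coeff_antideriv_zero p
    · rw [coeff_antideriv_succ, coeff_eq_zero_of_natDegree_lt (by omega), smul_zero]
  calc _ ≤ (((antideriv p - C c).roots.toFinset : Set K)).encard :=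
        Set.encard_le_encard fun x hx => by
          simpa [sub_ne_zero, sub_eq_zero] using hx
    _ ≤ _ := by
        rw [Set.encard_coe_eq_coe_finsetCard]
        exact_mod_cast (Multiset.toFinset_card_le _).trans ((card_roots' _).trans degree_le)

/-- A tuple `u` is the translate by `-x` of the centred tuple `w`, where `x` is minus the mean of
`u`; the equation for `x` is the one equation of `critVal u = a` lost by centring. -/
theorem critValFiber_subset_biUnion [Nonempty κ] (a : κ → K) (k₀ : κ) :
    (critValFiber a : Set (κ → K)) ⊆
      ⋃ w ∈ {w : κ → K | ∑ l, w l = 0 ∧ ∀ k, critVal w k - critVal w k₀ = a k - a k₀},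
        (fun x l => w l - x) ''
          {x | (antideriv (nodal Finset.univ w)).eval x = critVal w k₀ - a k₀} := by
  intro u (hu : critVal u = a)
  have card_ne_zero : (Fintype.card κ : K) ≠ 0 := by exact_mod_cast Fintype.card_ne_zero
  let c := -(∑ l, u l) / Fintype.card κ
  have sum_eq_zero : ∑ l, (u l + c) = 0 := by
    simp [c, Finset.sum_add_distrib, mul_div_cancel₀ _ card_ne_zero]
  have critVal_sub_eq (k : κ) : critVal (fun l => u l + c) k - critVal (fun l => u l + c) k₀ =
      a k - a k₀ := by
    rw [critVal_add_const, critVal_add_const, hu, sub_sub_sub_cancel_right]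
  have eval_eq : (antideriv (nodal Finset.univ fun l => u l + c)).eval c =
      critVal (fun l => u l + c) k₀ - a k₀ := by
    have := critVal_add_const (fun l => u l + c) (-c) k₀
    simp only [neg_neg, add_neg_cancel_right, hu] at this
    linear_combination this
  exact Set.mem_biUnion ⟨sum_eq_zero, critVal_sub_eq⟩
    ⟨c, eval_eq, funext fun l => add_sub_cancel_right _ _⟩

theorem encard_critValFiber_le [Nonempty κ] {a : κ → K} (ha : Function.Injective a) :
    (critValFiber a : Set (κ → K)).encard ≤ ((Fintype.card κ + 1) ^ Fintype.card κ : ℕ) := by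
  obtain ⟨k₀⟩ := ‹Nonempty κ›
  have centred_le := encard_centred_critVal_fiber_le ha k₀
  have card_pos : 0 < Fintype.card κ := Fintype.card_pos_iff.mpr ⟨k₀⟩
  obtain ⟨T, hT⟩ := (Set.finite_of_encard_le_coe centred_le).exists_finset_coe
  have subset_biUnion := critValFiber_subset_biUnion a k₀
  rw [← hT] at centred_le subset_biUnion
  calc (critValFiber a : Set (κ → K)).encard
      ≤ ∑ w ∈ T, ((fun x l => w l - x) ''
          {x | (antideriv (nodal Finset.univ w)).eval x = critVal w k₀ - a k₀}).encard :=
        (Set.encard_le_encard subset_biUnion).trans (T.set_encard_biUnion_le _)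
    _ ≤ ∑ w ∈ T, ((Fintype.card κ + 1 : ℕ) : ℕ∞) := Finset.sum_le_sum fun w _ =>
        (Set.encard_image_le _ _).trans <| by
          have := encard_eval_antideriv_eq_le (nodal_ne_zero (s := Finset.univ) (v := w))
            (critVal w k₀ - a k₀)
          rwa [natDegree_nodal, Finset.card_univ] at this
    _ = (T : Set (κ → K)).encard * (Fintype.card κ + 1 : ℕ) := by
        rw [Finset.sum_const, nsmul_eq_mul, Set.encard_coe_eq_coe_finsetCard]
    _ ≤ ((Fintype.card κ + 1) ^ (Fintype.card κ - 1) : ℕ) * (Fintype.card κ + 1 : ℕ) := by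
        gcongr
    _ = ((Fintype.card κ + 1) ^ Fintype.card κ : ℕ) := by
        rw [← Nat.cast_mul, pow_sub_one_mul card_pos.ne']

theorem critVal_of_unique [Unique κ] (u : κ → K) :
    critVal u default = -(u default) ^ 2 / 2 := by
  have half_mul_two : C (2⁻¹ : K) * 2 = 1 := by
    rw [← C_ofNat, ← C_mul, inv_mul_cancel₀ two_ne_zero, C_1]
  have hderiv : nodal Finset.univ u =
      derivative (C 2⁻¹ * X ^ 2 - C (u default) * X) := by
    simp only [nodal, Finset.univ_unique, Finset.prod_singleton, derivative_sub, derivative_C_mul,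
      derivative_X_sq, derivative_X, mul_one, C_ofNat]
    linear_combination -X * half_mul_two
  rw [critVal, hderiv, antideriv_derivative, coeff_zero_eq_eval_zero]
  simp only [eval_sub, eval_mul, eval_C, eval_pow, eval_X]
  ring

theorem mem_critValFiber {a u : κ → K} : u ∈ critValFiber a ↔ critVal u = a := Iff.rfl

theorem subsingleton_critValFiber {a : κ → K} (ha : Function.Injective a)
    (h0 : 0 ∈ critValFiber a) : Subsingleton (critValFiber a) := by
  have hκ : Subsingleton κ := ⟨fun k l => ha (by rw [← mem_critValFiber.mp h0]; rfl)⟩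
  suffices ∀ u ∈ critValFiber a, u = 0 from
    ⟨fun u v => Subtype.ext ((this u u.2).trans (this v v.2).symm)⟩
  intro u hu
  funext k
  have := uniqueOfSubsingleton k
  have h := congrFun ((mem_critValFiber.mp hu).trans (mem_critValFiber.mp h0).symm) default
  rw [Subsingleton.elim k default]
  simpa [critVal_of_unique] using h

theorem stabilizer_critValFiber_eq_bot {a : κ → K} (u : critValFiber a) (hu : (u : κ → K) ≠ 0) :
    MulAction.stabilizer (rootsOfUnity (Fintype.card κ + 1) K) u = ⊥ := by
  obtain ⟨k, hk⟩ := Function.ne_iff.mp hu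
  refine (Subgroup.eq_bot_iff_forall _).mpr fun ζ hζ => ?_
  have : ((ζ : Kˣ) : K) * (u : κ → K) k = (u : κ → K) k :=
    congrFun (congrArg Subtype.val (MulAction.mem_stabilizer_iff.mp hζ)) k
  exact Subtype.ext (Units.ext (mul_eq_right₀ hk |>.mp this))

theorem card_orbits_critValFiber_le [Nonempty κ] [HasEnoughRootsOfUnity K (Fintype.card κ + 1)]
    {a : κ → K} (ha : Function.Injective a) :
    Nat.card (MulAction.orbitRel.Quotient (rootsOfUnity (Fintype.card κ + 1) K) (critValFiber a)) ≤
      (Fintype.card κ + 1) ^ (Fintype.card κ - 1) := by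
  by_cases h0 : 0 ∈ critValFiber a
  · have := subsingleton_critValFiber ha h0
    have : Subsingleton
        (MulAction.orbitRel.Quotient (rootsOfUnity (Fintype.card κ + 1) K) (critValFiber a)) :=
      Quot.Subsingleton
    exact (Finite.card_le_one_iff_subsingleton.mpr this).trans (Nat.one_le_pow _ _ (Nat.succ_pos _))
  have card_fiber_le : Nat.card (critValFiber a) ≤ (Fintype.card κ + 1) ^ Fintype.card κ :=
    ENat.toNat_le_of_le_natCast (encard_critValFiber_le ha)
  rw [Nat.card_congr (MulAction.selfEquivOrbitsQuotientProd fun u =>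
      stabilizer_critValFiber_eq_bot u fun hu => h0 (hu ▸ u.2)), Nat.card_prod,
    HasEnoughRootsOfUnity.natCard_rootsOfUnity,
    ← pow_sub_one_mul (Fintype.card_ne_zero (α := κ))] at card_fiber_le
  exact Nat.le_of_mul_le_mul_right card_fiber_le (Nat.succ_pos _)

end Fibers

theorem nodal_smul {ι K : Type*} [Fintype ι] [Field K] {ω : K} (hω : ω ≠ 0) (x : ι → K) :
    nodal Finset.univ (ω • x) =
      C (ω ^ Fintype.card ι) * (nodal Finset.univ x).comp (C ω⁻¹ * X) := by
  have C_mul_C_inv : C ω * C ω⁻¹ = 1 := by rw [← C_mul, mul_inv_cancel₀ hω, C_1]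
  rw [nodal, nodal, prod_comp, ← Finset.card_univ, ← Finset.prod_const, map_prod,
    ← Finset.prod_mul_distrib]
  refine Finset.prod_congr rfl fun i _ => ?_
  rw [Pi.smul_apply, smul_eq_mul, C_mul, sub_comp, X_comp, C_comp]
  linear_combination -X * C_mul_C_inv

theorem finite_setOf_nodal_eq {ι K : Type*} [Fintype ι] [CommRing K] [IsDomain K] (Q : K[X]) :
    {x : ι → K | nodal Finset.univ x = Q}.Finite := by
  rcases Set.eq_empty_or_nonempty {x : ι → K | nodal Finset.univ x = Q} with h | ⟨x, rfl⟩
  · exact h ▸ Set.finite_empty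
  refine (Set.finite_range fun π : Equiv.Perm ι => x ∘ π).subset fun y hy => ?_
  obtain ⟨π, hπ⟩ := exists_perm_of_nodal_eq (Eq.symm hy)
  exact ⟨π, (funext hπ).symm⟩

theorem coeff_zero_nodal {ι R : Type*} [Fintype ι] [CommRing R] (x : ι → R) :
    (nodal Finset.univ x).coeff 0 = (-1) ^ Fintype.card ι * ∏ i, x i := by
  rw [coeff_zero_eq_eval_zero, eval_nodal]
  simp [Finset.prod_neg]

theorem eq_of_derivative_eq_of_eval_eq {K : Type*} [Field K] [CharZero K] {p q : K[X]}
    (h : derivative p = derivative q) {x : K} (hx : p.eval x = q.eval x) : p = q := by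
  have h_eq : p - C (p.coeff 0) = q - C (q.coeff 0) := by
    rw [← antideriv_derivative, ← antideriv_derivative, h]
  have coeff_zero_eq : p.coeff 0 = q.coeff 0 := by
    have := congrArg (eval x) h_eq
    simp only [eval_sub, eval_C] at this
    linear_combination hx - this
  rwa [coeff_zero_eq, sub_left_inj] at h_eq

section CritLabel

variable {K κ : Type*} [Field K] [Fintype κ]

/-- The critical points of the monic polynomial `Q` of degree `card κ + 1`, with multiplicity, are
the `u k`, and the critical value at `u k` is `r k`. -/
structure IsCritLabel (Q : K[X]) (u r : κ → K) : Prop where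
  derivative_eq : derivative Q = C (Fintype.card κ + 1 : K) * nodal Finset.univ u
  eval_eq : ∀ k, Q.eval (u k) = r k

variable {Q Q' : K[X]} {u v r : κ → K}

theorem exists_isCritLabel
    (hderiv : derivative Q = C (Fintype.card κ + 1 : K) * nodal Finset.univ u)
    (hvals : Finset.univ.val.map (fun k => Q.eval (u k)) = Finset.univ.val.map r) :
    ∃ v, IsCritLabel Q v r := by
  obtain ⟨π, hπ⟩ := exists_perm_of_map_univ_eq hvals
  exact ⟨u ∘ π, by rw [nodal_comp_perm, hderiv], fun k => (hπ k).symm⟩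

variable [CharZero K]

theorem IsCritLabel.critVal_eq (h : IsCritLabel Q u r) :
    critVal u = fun k => (r k - Q.coeff 0) / (Fintype.card κ + 1) := by
  funext k
  have := antideriv_derivative Q
  rw [h.derivative_eq, ← smul_eq_C_mul, map_smul] at this
  have eval_eq := congrArg (eval (u k)) this
  rw [eval_smul, eval_sub, eval_C, h.eval_eq, smul_eq_mul] at eval_eq
  rw [← eval_eq, mul_div_cancel_left₀ _ (Nat.cast_add_one_ne_zero _), critVal]

theorem IsCritLabel.eq_polynomial [Nonempty κ] (h : IsCritLabel Q u r) (h' : IsCritLabel Q' u r) :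
    Q = Q' :=
  eq_of_derivative_eq_of_eval_eq (h.derivative_eq.trans h'.derivative_eq.symm)
    ((h.eval_eq (Classical.arbitrary κ)).trans (h'.eval_eq _).symm)

theorem IsCritLabel.eq_label (hr : Function.Injective r) (h : IsCritLabel Q u r)
    (h' : IsCritLabel Q v r) : u = v := by
  have nodal_eq : nodal Finset.univ u = nodal Finset.univ v :=
    mul_left_cancel₀ (C_ne_zero.mpr (Nat.cast_add_one_ne_zero _))
      (h.derivative_eq.symm.trans h'.derivative_eq)
  obtain ⟨π, hπ⟩ := exists_perm_of_nodal_eq nodal_eq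
  funext k
  have : r k = r (π k) := by
    rw [← h'.eval_eq, hπ, h.eval_eq]
  rw [hπ, ← hr this]

theorem IsCritLabel.smul {ι : Type*} [Fintype ι] (hι : Fintype.card ι = Fintype.card κ + 1)
    {x : ι → K} (h : IsCritLabel (nodal Finset.univ x) u r) {ω : K}
    (hω : ω ^ Fintype.card ι = 1) :
    IsCritLabel (nodal Finset.univ (ω • x)) (ω • u) r where
  derivative_eq := by
    have ω_ne_zero : ω ≠ 0 := by
      rintro rfl
      rw [hι, zero_pow (Nat.succ_ne_zero _)] at hω
      exact zero_ne_one hω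
    have pow_mul_inv : ω ^ Fintype.card ι * ω⁻¹ = ω ^ Fintype.card κ := by
      rw [hι, pow_succ, mul_inv_cancel_right₀ ω_ne_zero]
    rw [nodal_smul ω_ne_zero, nodal_smul ω_ne_zero, derivative_C_mul, derivative_comp,
      h.derivative_eq, mul_comp, C_comp, derivative_C_mul, derivative_X, mul_one,
      ← pow_mul_inv, C_mul]
    ring
  eval_eq k := by
    rw [← h.eval_eq k, eval_nodal, eval_nodal]
    simp only [Pi.smul_apply, smul_eq_mul, ← mul_sub]
    rw [Finset.prod_mul_distrib, Finset.prod_const, Finset.card_univ, hω, one_mul]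

variable {ι : Type*} [Fintype ι]

theorem exists_perm_iff_of_isCritLabel [Nonempty κ] (hr : Function.Injective r)
    (hι : Fintype.card ι = Fintype.card κ + 1)
    {x y : ι → K} (hx : IsCritLabel (nodal Finset.univ x) u r)
    (hy : IsCritLabel (nodal Finset.univ y) v r) {ω : K} (hω : ω ^ Fintype.card ι = 1) :
    v = ω • u ↔ ∃ π : Equiv.Perm ι, ∀ i, y i = ω * x (π i) := by
  constructor
  · rintro rfl
    exact exists_perm_of_nodal_eq ((hx.smul hι hω).eq_polynomial hy)
  · rintro ⟨π, hπ⟩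
    refine hy.eq_label hr ?_
    have := hx.smul hι hω
    rwa [← nodal_comp_perm _ π, ← show y = (ω • x) ∘ π from funext hπ] at this

theorem mk_eq_mk_iff_exists_smul {a : κ → K} {u v : critValFiber a} :
    (⟦u⟧ : MulAction.orbitRel.Quotient (rootsOfUnity (Fintype.card κ + 1) K) (critValFiber a)) =
        ⟦v⟧ ↔
      ∃ ω : K, ω ^ (Fintype.card κ + 1) = 1 ∧ (v : κ → K) = ω • (u : κ → K) := by
  rw [eq_comm, Quotient.eq, MulAction.orbitRel_apply, MulAction.mem_orbit_iff]
  constructor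
  · rintro ⟨ζ, rfl⟩
    exact ⟨(ζ : Kˣ), (mem_rootsOfUnity' _ _).mp ζ.2, rfl⟩
  · rintro ⟨ω, hω, huv⟩
    exact ⟨rootsOfUnity.mkOfPowEq ω hω, Subtype.ext huv.symm⟩

/-- The tuples of roots with product `b` of the monic polynomials whose critical values, for some
labelling of the critical points, are the entries of `r`. -/
def critValTuples (ι : Type*) [Fintype ι] (b : K) (r : κ → K) : Set (ι → K) :=
  {x | ∏ i, x i = b ∧ ∃ u, IsCritLabel (nodal Finset.univ x) u r}

theorem exists_critVal_eq_of_mem_critValTuples (ι) [Fintype ι] (b : K) {r : κ → K}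
    (hr : Function.Injective r) :
    ∃ a : κ → K, Function.Injective a ∧ ∀ x ∈ critValTuples ι b r, ∀ u,
      IsCritLabel (nodal Finset.univ x) u r → u ∈ critValFiber a := by
  refine ⟨fun k => (r k - (-1) ^ Fintype.card ι * b) / (Fintype.card κ + 1), fun k l hkl => ?_, ?_⟩
  · exact hr (sub_left_inj.mp ((div_left_inj' (Nat.cast_add_one_ne_zero _)).mp hkl))
  · rintro x ⟨hx, -⟩ u hu
    rw [mem_critValFiber, hu.critVal_eq, coeff_zero_nodal, hx]

theorem finite_critValTuples [Nonempty κ] (hr : Function.Injective r) (b : K) :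
    (critValTuples ι b r).Finite := by
  obtain ⟨a, ha, ha_mem⟩ := exists_critVal_eq_of_mem_critValTuples ι b hr
  refine ((Set.finite_of_encard_le_coe (encard_critValFiber_le ha)).biUnion
    (t := fun u => {x : ι → K | IsCritLabel (nodal Finset.univ x) u r}) fun u _ => ?_).subset
      fun x hx => ?_
  · rcases Set.eq_empty_or_nonempty {x : ι → K | IsCritLabel (nodal Finset.univ x) u r}
      with h | ⟨x, hx⟩
    · exact h ▸ Set.finite_empty
    · exact (finite_setOf_nodal_eq _).subset fun y hy => IsCritLabel.eq_polynomial hy hx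
  · obtain ⟨u, hu⟩ := hx.2
    exact Set.mem_biUnion (ha_mem x hx u hu) hu

theorem exists_classifying_map_critValTuples [Nonempty κ] {n : ℕ} [HasEnoughRootsOfUnity K n]
    (hι : Fintype.card ι = n) (hκ : Fintype.card κ + 1 = n) (hr : Function.Injective r) (b : K) :
    ∃ F : critValTuples ι b r → Fin (n ^ (n - 2)),
      ∀ x y, F x = F y ↔ ∃ ω : K, ω ^ n = 1 ∧
        ∃ π : Equiv.Perm ι, ∀ i, (y : ι → K) i = ω * (x : ι → K) (π i) := by
  subst hκ
  obtain ⟨a, ha, ha_mem⟩ := exists_critVal_eq_of_mem_critValTuples ι b hr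
  have : Finite (critValFiber a) := Set.finite_of_encard_le_coe (encard_critValFiber_le ha)
  choose u hu using fun x : critValTuples ι b r => x.2.2
  let orbit (x : critValTuples ι b r) :
      MulAction.orbitRel.Quotient (rootsOfUnity (Fintype.card κ + 1) K) (critValFiber a) :=
    ⟦⟨u x, ha_mem x x.2 (u x) (hu x)⟩⟧
  refine ⟨fun x => Fin.castLE (card_orbits_critValFiber_le ha) (Finite.equivFin _ (orbit x)),
    fun x y => ?_⟩
  rw [(Fin.castLE_injective _).eq_iff, (Finite.equivFin _).injective.eq_iff,
    mk_eq_mk_iff_exists_smul]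
  refine exists_congr fun ω => and_congr_right fun hω => ?_
  exact exists_perm_iff_of_isCritLabel hr hι (hu x) (hu y) (hι ▸ hω)

end CritLabel

theorem exists_injective_map_univ_eq {α : Type*} {n : ℕ} {s : Multiset α} (hs : s.Nodup)
    (hn : s.card = n) : ∃ r : Fin n → α, Function.Injective r ∧ Finset.univ.val.map r = s := by
  obtain ⟨l, rfl⟩ := Quot.exists_rep s
  obtain rfl : l.length = n := hn
  have map_get : Finset.univ.val.map l.get = (l : Multiset α) := by
    rw [Fin.univ_val_map, List.ofFn_get]
  exact ⟨l.get, List.nodup_iff_injective_get.mp (Multiset.coe_nodup.mp hs), map_get⟩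

theorem stmt_13_general {K : Type*} [Field K] [CharZero K] {n : ℕ} (hn : 2 ≤ n)
    [HasEnoughRootsOfUnity K n] {R : Multiset K} (hRcard : R.card = n - 1) (hRnd : R.Nodup)
    (b : K) {S : Set (Fin n → K)}
    (hS : ∀ l ∈ S, ∏ i, l i = b ∧ ∃ κ : Fin (n - 1) → K,
        derivative (∏ j, (X - C (l j))) = C (n : K) * ∏ j, (X - C (κ j)) ∧
        Finset.univ.val.map (fun j => (∏ i, (X - C (l i))).eval (κ j)) = R) :
    S.Finite ∧ ∃ F : S → Fin (n ^ (n - 2)), ∀ x y : S,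
      F x = F y ↔ ∃ ω : K, ω ^ n = 1 ∧ ∃ π : Equiv.Perm (Fin n),
        ∀ i, (y : Fin n → K) i = ω * (x : Fin n → K) (π i) := by
  obtain ⟨r, hr, rfl⟩ := exists_injective_map_univ_eq hRnd hRcard
  have hcard : Fintype.card (Fin (n - 1)) + 1 = n := by
    rw [Fintype.card_fin, Nat.sub_add_cancel (one_le_two.trans hn)]
  have : Nonempty (Fin (n - 1)) := Fin.pos_iff_nonempty.mp (Nat.sub_pos_of_lt hn)
  have subset_critValTuples : S ⊆ critValTuples (Fin n) b r := fun l hl => by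
    obtain ⟨hprod, u, hderiv, hvals⟩ := hS l hl
    refine ⟨hprod, exists_isCritLabel (hderiv.trans ?_) hvals⟩
    rw [← Nat.cast_add_one, hcard, nodal]
  obtain ⟨F, hF⟩ := exists_classifying_map_critValTuples (Fintype.card_fin n) hcard hr b
  exact ⟨(finite_critValTuples hr b).subset subset_critValTuples,
    F ∘ Set.inclusion subset_critValTuples, fun x y => hF _ _⟩

/-- For a non-degenerate Henry–Parusiński value `R` (a multiset of
`n−1` pairwise distinct nonzero complex numbers), the set `S` of injective
tuples of nonzero complex numbers with product one whose associated polynomial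
`Q_λ` has `n−1` distinct critical points and multiset of critical values `R`
is finite, and has at most `n^(n−2)` equivalence classes under permutation and
multiplication by `n`-th roots of unity. -/
theorem stmt_13 (n : ℕ) (hn : 2 ≤ n) (R : Multiset ℂ)
    (hRcard : Multiset.card R = n - 1) (hRnd : R.Nodup) (hR0 : (0 : ℂ) ∉ R)
    (S : Set (Fin n → ℂ))
    (hS : S = {l | Function.Injective l ∧ (∀ i, l i ≠ 0) ∧ ∏ i, l i = 1 ∧
      ∃ κ : Fin (n - 1) → ℂ, Function.Injective κ ∧
        Polynomial.derivative (∏ j : Fin n, (Polynomial.X - Polynomial.C (l j))) =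
          Polynomial.C (n : ℂ) *
            ∏ j : Fin (n - 1), (Polynomial.X - Polynomial.C (κ j)) ∧
        (Finset.univ.val.map (fun j : Fin (n - 1) =>
          (∏ i : Fin n, (Polynomial.X - Polynomial.C (l i))).eval (κ j)) :
            Multiset ℂ) = R}) :
    S.Finite ∧ ∃ F : S → Fin (n ^ (n - 2)), ∀ x y : S,
      F x = F y ↔ ∃ ω : ℂ, ω ^ n = 1 ∧ ∃ π : Equiv.Perm (Fin n),
        ∀ i, (y : Fin n → ℂ) i = ω * (x : Fin n → ℂ) (π i) := by
  have : NeZero (n : ℂ) := ⟨Nat.cast_ne_zero.mpr (two_pos.trans_le hn).ne'⟩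
  refine stmt_13_general hn hRcard hRnd 1 fun l hl => ?_
  obtain ⟨-, -, hprod, κ, -, hκ⟩ := hS.subset hl
  exact ⟨hprod, κ, hκ⟩
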